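/- Let ζ be a primitive aperiodic binary substitution of constant length q ≥ 2 with ζ(0) starting with 0 and x = ζ^∞(0). Then for every integer ℓ ≥ 1 the asymptotic recurrence rate RR_ℓ(x,∞,ε₀) = lim_{n→∞} RR_ℓ(x,n,ε₀) exists and RR_ℓ(x,∞,ε₀) = Σ_{l≥ℓ} l·dens(K_l) > 0. -/

import Mathlib

open Filter Topology MeasureTheory

namespace RQA

/-- The standard metric on symbolic sequences over an alphabet `α`:
`ρ(x,y) = 2^{-min{i : x i ≠ y i}}` for `x ≠ y` and `ρ(x,x) = 0`. -/
noncomputable def seqDist {α : Type*} (x y : ℕ → α) : ℝ :=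
  haveI := Classical.propDecidable (x = y)
  if x = y then 0 else (2 : ℝ) ^ (-((sInf {i : ℕ | x i ≠ y i} : ℕ) : ℤ))

/-- The (one-sided) shift on sequences. -/
def shift {α : Type*} (x : ℕ → α) : ℕ → α := fun i => x (i + 1)

/-- The embedded sequence `x^{(m)}`, a sequence over the alphabet `α^m`. -/
def embedSeq {α : Type*} (m : ℕ) (x : ℕ → α) : ℕ → (Fin m → α) :=
  fun j t => x (j + (t : ℕ))

section RQAdefs

variable {X : Type*} (d : X → X → ℝ) (f : X → X) (x : X)

/-- The entry of the recurrence plot at `(i,j)` equals `1`. -/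
def RPone (ε : ℝ) (i j : ℕ) : Prop := d (f^[i] x) (f^[j] x) ≤ ε

/-- `(i, j, l)` is a diagonal line in the recurrence plot `RP(x, n, ε)`. -/
def IsLine (n : ℕ) (ε : ℝ) (i j l : ℕ) : Prop :=
  1 ≤ l ∧ i + l ≤ n ∧ j + l ≤ n ∧ i ≠ j ∧
  (∀ h, h < l → RPone d f x ε (i + h) (j + h)) ∧
  (0 < i → 0 < j → ¬ RPone d f x ε (i - 1) (j - 1)) ∧
  (max i j + l < n → ¬ RPone d f x ε (i + l) (j + l))

/-- `N_l(x, n, ε)`: the number of diagonal lines of length exactly `l`. -/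
noncomputable def Nlines (n : ℕ) (ε : ℝ) (l : ℕ) : ℕ :=
  Set.ncard {p : ℕ × ℕ | IsLine d f x n ε p.1 p.2 l}

/-- `P_l(x, n, ε) = N_l/(n² − n)`. -/
noncomputable def Pline (n : ℕ) (ε : ℝ) (l : ℕ) : ℝ :=
  (Nlines d f x n ε l : ℝ) / ((n : ℝ) ^ 2 - (n : ℝ))

/-- `P≥_ℓ(x, n, ε) = Σ_{l ≥ ℓ} P_l`. -/
noncomputable def PlineGe (n : ℕ) (ε : ℝ) (ℓ : ℕ) : ℝ :=
  ∑' k : ℕ, Pline d f x n ε (ℓ + k)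

/-- The recurrence rate `RR_ℓ(x, n, ε) = Σ_{l ≥ ℓ} l · P_l`. -/
noncomputable def RRate (n : ℕ) (ε : ℝ) (ℓ : ℕ) : ℝ :=
  ∑' k : ℕ, ((ℓ + k : ℕ) : ℝ) * Pline d f x n ε (ℓ + k)

/-- The determinism `DET_ℓ(x, n, ε) = RR_ℓ/RR_1`. -/
noncomputable def DETrm (n : ℕ) (ε : ℝ) (ℓ : ℕ) : ℝ :=
  RRate d f x n ε ℓ / RRate d f x n ε 1

/-- The average line length `L_ℓ(x, n, ε) = RR_ℓ/P≥_ℓ`. -/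
noncomputable def LAvg (n : ℕ) (ε : ℝ) (ℓ : ℕ) : ℝ :=
  RRate d f x n ε ℓ / PlineGe d f x n ε ℓ

/-- The entropy of line lengths
`ENT_ℓ(x, n, ε) = log P≥_ℓ − (1/P≥_ℓ)·Σ_{l≥ℓ} P_l · log P_l` (with `0·log 0 = 0`). -/
noncomputable def ENTln (n : ℕ) (ε : ℝ) (ℓ : ℕ) : ℝ :=
  Real.log (PlineGe d f x n ε ℓ) -
    (PlineGe d f x n ε ℓ)⁻¹ *
      ∑' k : ℕ, Pline d f x n ε (ℓ + k) * Real.log (Pline d f x n ε (ℓ + k))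

/-- The correlation sum
`C_ℓ(x, n, ε) = n^{-2}·#{(i,j) ∈ [0,n)² : d_ℓ(f^i x, f^j x) ≤ ε}`,
where `d_ℓ` is the Bowen metric. -/
noncomputable def corrSum (ℓ n : ℕ) (ε : ℝ) : ℝ :=
  (Set.ncard {p : ℕ × ℕ | p.1 < n ∧ p.2 < n ∧
      ∀ k, k < ℓ → d (f^[p.1 + k] x) (f^[p.2 + k] x) ≤ ε} : ℝ) / (n : ℝ) ^ 2

end RQAdefs

/-- The extension of a substitution to a morphism of the free monoid of finite words. -/
def substWord (ζ : Bool → List Bool) : List Bool → List Bool :=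
  fun w => w.foldr (fun a r => ζ a ++ r) []

/-- `ζ` is a (binary) substitution of constant length `q ≥ 2`. -/
def IsConstLenSubst (ζ : Bool → List Bool) (q : ℕ) : Prop :=
  2 ≤ q ∧ ∀ a : Bool, (ζ a).length = q

/-- The language `L_ζ`: subwords of the words `ζ^k(a)`, `a ∈ A`, `k ≥ 1`. -/
def substLang (ζ : Bool → List Bool) : Set (List Bool) :=
  {w | ∃ a : Bool, ∃ k : ℕ, 1 ≤ k ∧ w <:+: (substWord ζ)^[k] [a]}

/-- The substitution subshift `X_ζ`. -/
def SubstShift (ζ : Bool → List Bool) : Set (ℕ → Bool) :=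
  {y | ∀ n : ℕ, (List.ofFn fun t : Fin n => y (t : ℕ)) ∈ substLang ζ}

/-- `ζ` is primitive. -/
def IsPrimitive (ζ : Bool → List Bool) : Prop :=
  ∃ k : ℕ, 1 ≤ k ∧ ∀ a b : Bool, b ∈ (substWord ζ)^[k] [a]

/-- `ζ` is aperiodic: `X_ζ` contains a non-periodic sequence. -/
def IsAperiodic (ζ : Bool → List Bool) : Prop :=
  ∃ y ∈ SubstShift ζ, ∀ p : ℕ, 1 ≤ p → ∃ i : ℕ, y (i + p) ≠ y i

/-- The action of a constant length-`q` substitution on infinite sequences. -/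
def substSeq (ζ : Bool → List Bool) (q : ℕ) (x : ℕ → Bool) : ℕ → Bool :=
  fun i => (ζ (x (i / q))).getD (i % q) false

/-- `(i, j, l)` is a line in the infinite symbolic recurrence plot `RP(x, ∞, ε₀)`. -/
def IsInfLine (x : ℕ → Bool) (i j l : ℕ) : Prop :=
  1 ≤ l ∧ i ≠ j ∧ (∀ h, h < l → x (i + h) = x (j + h)) ∧
  (0 < i → 0 < j → x (i - 1) ≠ x (j - 1)) ∧ x (i + l) ≠ x (j + l)

/-- `K_l`: the set of starting points `(i,j)`, `i,j ≥ 1`, of inner lines of length `l`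
in the infinite symbolic recurrence plot. -/
def Kset (x : ℕ → Bool) (l : ℕ) : Set (ℕ × ℕ) :=
  {p | 1 ≤ p.1 ∧ 1 ≤ p.2 ∧ IsInfLine x p.1 p.2 l}

/-- `#(M ∩ [0,n)²)/n²`. -/
noncomputable def densCount (M : Set (ℕ × ℕ)) (n : ℕ) : ℝ :=
  (Set.ncard (M ∩ {p : ℕ × ℕ | p.1 < n ∧ p.2 < n}) : ℝ) / (n : ℝ) ^ 2

/-- `M ⊆ ℕ²` has asymptotic density `a`. -/
def HasDens (M : Set (ℕ × ℕ)) (a : ℝ) : Prop :=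
  Tendsto (densCount M) atTop (𝓝 a)

/-- `δ_l(n) = #(K_l ∩ [1,n)²)/(n² − n)`. -/
noncomputable def deltaK (x : ℕ → Bool) (l n : ℕ) : ℝ :=
  (Set.ncard (Kset x l ∩ {p : ℕ × ℕ | p.1 < n ∧ p.2 < n}) : ℝ) / ((n : ℝ) ^ 2 - (n : ℝ))

/-- `M` is a minimal subset of the subshift `Y`. -/
def IsMinimalSubset (Y M : Set (ℕ → Bool)) : Prop :=
  M ⊆ Y ∧ M.Nonempty ∧ IsClosed M ∧ (∀ z ∈ M, shift z ∈ M) ∧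
  ∀ M' : Set (ℕ → Bool), M' ⊆ M → M'.Nonempty → IsClosed M' →
    (∀ z ∈ M', shift z ∈ M') → M' = M

end RQA

open RQA

/-!
Write `κ m` for the limit of the correlation sums of `x` with word length `m` at `ε = 1/2`, where
`σ^i x` and `σ^j x` are close exactly when `x i = x j`. Extending a repeated word by one letter to
the left or to the right shows that the number of lines of length exactly `l` is a second difference
in `l` of the number of pairs of equal words of length `l`. Hence `K_l` has density
`κ l - 2 κ (l + 1) + κ (l + 2)`, and summation by parts gives the limit `ℓ κ ℓ - (ℓ - 1) κ (ℓ + 1)`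
of the recurrence rate. The densities are nonnegative, so `κ` is convex; if `κ → 0`, the boundary
terms of the same summation by parts, now over all `l ≥ ℓ`, vanish.

If words occur in `x` with frequencies, then `κ m` is the sum of the squared frequencies of the
words of length `m`. It is positive, and it tends to `0` when `x` is uniformly aperiodic, since then
two occurrences of a long word are far apart. For a fixed point of a primitive substitution of
constant length the frequencies exist because any two blocks `ζ^K(a)`, `ζ^K(b)` share a letter, so
that the oscillation of block averages contracts geometrically under `ζ^K`. Uniform aperiodicity
holds because every word of `X_ζ` occurs in `x` with bounded gaps.
-/

namespace RQA

section RecurrencePlot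

variable {α : Type*} (x : ℕ → α) (m i j : ℕ)

theorem iterate_shift_apply (k : ℕ) : shift^[i] x k = x (i + k) := by
  induction i generalizing x with
  | zero => simp
  | succ i ih => rw [Function.iterate_succ_apply, ih, shift, Nat.add_right_comm]

theorem seqDist_le_half_iff (y z : ℕ → α) : seqDist y z ≤ 1 / 2 ↔ y 0 = z 0 := by
  unfold seqDist
  split_ifs with hyz
  · simp [hyz]
  have hdiff : {i : ℕ | y i ≠ z i}.Nonempty := Function.ne_iff.1 hyz
  have hsInf : sInf {i : ℕ | y i ≠ z i} = 0 ↔ y 0 ≠ z 0 := by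
    simp [Nat.sInf_eq_zero, hdiff.ne_empty]
  rw [show (1 / 2 : ℝ) = 2 ^ (-1 : ℤ) by norm_num, zpow_le_zpow_iff_right₀ one_lt_two,
    neg_le_neg_iff, Nat.one_le_cast, Nat.one_le_iff_ne_zero, Ne, hsInf, not_not]

theorem RPone_half_iff : RPone seqDist shift x (1 / 2) i j ↔ x i = x j := by
  simp only [RPone, seqDist_le_half_iff, iterate_shift_apply, add_zero]

theorem embedSeq_eq_iff :
    embedSeq m x i = embedSeq m x j ↔ ∀ h, h < m → x (i + h) = x (j + h) := by
  simp only [funext_iff, embedSeq, Fin.forall_iff]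

theorem embedSeq_succ_eq_iff_last :
    embedSeq (m + 1) x i = embedSeq (m + 1) x j ↔
      embedSeq m x i = embedSeq m x j ∧ x (i + m) = x (j + m) := by
  simp only [embedSeq_eq_iff, Nat.forall_lt_succ_right]

theorem embedSeq_succ_eq_iff_first :
    embedSeq (m + 1) x i = embedSeq (m + 1) x j ↔
      x i = x j ∧ embedSeq m x (i + 1) = embedSeq m x (j + 1) := by
  simp only [embedSeq_eq_iff, Nat.forall_lt_succ_left, add_zero, add_assoc, add_comm 1]

variable {x m i j} in
theorem embedSeq_eq_of_le {k : ℕ} (hkm : k ≤ m) (h : embedSeq m x i = embedSeq m x j) :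
    embedSeq k x i = embedSeq k x j := by
  rw [embedSeq_eq_iff] at h ⊢
  exact fun t ht => h t (ht.trans_le hkm)

end RecurrencePlot

theorem sum_range_mul_second_difference (a : ℕ → ℝ) (ℓ N : ℕ) :
    ∑ k ∈ Finset.range N,
        ((ℓ + k : ℕ) : ℝ) * (a (ℓ + k) - 2 * a (ℓ + k + 1) + a (ℓ + k + 2)) =
      (ℓ * a ℓ - (ℓ - 1) * a (ℓ + 1)) -
        (((ℓ + N : ℕ) : ℝ) * a (ℓ + N) - (((ℓ + N : ℕ) : ℝ) - 1) * a (ℓ + N + 1)) := by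
  induction N with
  | zero => simp
  | succ N ih =>
    rw [Finset.sum_range_succ, ih]
    simp only [← add_assoc]
    push_cast
    ring

section LineCount

variable {α : Type*} [DecidableEq α] (x : ℕ → α)

/-- The off-diagonal pairs `(i, j)` at which two equal words of length `m` start, both of them
lying inside `x_0 ⋯ x_{n-1}`. -/
def repeatedPairs (n m : ℕ) : Finset (ℕ × ℕ) :=
  {p ∈ Finset.range (n + 1 - m) ×ˢ Finset.range (n + 1 - m) |
    p.1 ≠ p.2 ∧ embedSeq m x p.1 = embedSeq m x p.2}

/-- The pairs of `repeatedPairs` whose common word cannot be extended to the left: these are the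
starting points of the diagonal lines of length at least `m`. -/
def leftMaximalPairs (n m : ℕ) : Finset (ℕ × ℕ) :=
  {p ∈ repeatedPairs x n m | 0 < p.1 → 0 < p.2 → x (p.1 - 1) ≠ x (p.2 - 1)}

variable {x} in
theorem mem_repeatedPairs {n m i j : ℕ} :
    (i, j) ∈ repeatedPairs x n m ↔
      i + m ≤ n ∧ j + m ≤ n ∧ i ≠ j ∧ embedSeq m x i = embedSeq m x j := by
  simp only [repeatedPairs, Finset.mem_filter, Finset.mem_product, Finset.mem_range]
  grind

theorem repeatedPairs_eq_empty {n m : ℕ} (h : n < m) : repeatedPairs x n m = ∅ := by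
  simp [repeatedPairs, Nat.sub_eq_zero_of_le h]

theorem leftMaximalPairs_succ_subset (n m : ℕ) :
    leftMaximalPairs x n (m + 1) ⊆ leftMaximalPairs x n m := by
  rintro ⟨i, j⟩ h
  simp only [leftMaximalPairs, Finset.mem_filter, mem_repeatedPairs] at h ⊢
  obtain ⟨⟨hi, hj, hij, hword⟩, hleft⟩ := h
  exact ⟨⟨by omega, by omega, hij, embedSeq_eq_of_le m.le_succ hword⟩, hleft⟩

-- Extending the common word by one letter to the left is a bijection from the pairs of
-- `repeatedPairs x n m` that are not left-maximal onto `repeatedPairs x n (m + 1)`.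
theorem card_leftMaximalPairs_add_card_repeatedPairs_succ (n m : ℕ) :
    (leftMaximalPairs x n m).card + (repeatedPairs x n (m + 1)).card =
      (repeatedPairs x n m).card := by
  rw [leftMaximalPairs, ← Finset.card_filter_add_card_filter_not (s := repeatedPairs x n m)
    (fun p => 0 < p.1 → 0 < p.2 → x (p.1 - 1) ≠ x (p.2 - 1)), Nat.add_left_cancel_iff]
  refine Finset.card_bij (fun p _ => (p.1 + 1, p.2 + 1)) ?_ (by grind) ?_
  · rintro ⟨i, j⟩ h
    rw [mem_repeatedPairs, embedSeq_succ_eq_iff_first] at h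
    obtain ⟨hi, hj, hij, hletter, hword⟩ := h
    rw [Finset.mem_filter, mem_repeatedPairs]
    exact ⟨⟨by omega, by omega, by omega, hword⟩, by simp [hletter]⟩
  · rintro ⟨i, j⟩ h
    rw [Finset.mem_filter, mem_repeatedPairs] at h
    obtain ⟨⟨hi, hj, hij, hword⟩, hletter⟩ := h
    push Not at hletter
    obtain ⟨hi0, hj0, hletter⟩ := hletter
    obtain ⟨i, rfl⟩ := Nat.exists_eq_succ_of_ne_zero hi0.ne'
    obtain ⟨j, rfl⟩ := Nat.exists_eq_succ_of_ne_zero hj0.ne'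
    refine ⟨(i, j), ?_, rfl⟩
    rw [mem_repeatedPairs, embedSeq_succ_eq_iff_first]
    exact ⟨by omega, by omega, by omega, by simpa using hletter, hword⟩

theorem setOf_isLine_eq_coe_sdiff (n : ℕ) {l : ℕ} (hl : 1 ≤ l) :
    {p : ℕ × ℕ | IsLine seqDist shift x n (1 / 2) p.1 p.2 l} =
      ↑(leftMaximalPairs x n l \ leftMaximalPairs x n (l + 1)) := by
  ext ⟨i, j⟩
  simp only [Set.mem_ofPred_eq, IsLine, RPone_half_iff, Finset.mem_coe, Finset.mem_sdiff,
    leftMaximalPairs, Finset.mem_filter, mem_repeatedPairs, embedSeq_succ_eq_iff_last,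
    ← embedSeq_eq_iff]
  grind

theorem Nlines_half_eq_second_difference (n : ℕ) {l : ℕ} (hl : 1 ≤ l) :
    (Nlines seqDist shift x n (1 / 2) l : ℝ) =
      (repeatedPairs x n l).card - 2 * (repeatedPairs x n (l + 1)).card +
        (repeatedPairs x n (l + 2)).card := by
  have hsub := leftMaximalPairs_succ_subset x n l
  rw [Nlines, setOf_isLine_eq_coe_sdiff x n hl, Set.ncard_coe_finset,
    Finset.card_sdiff_of_subset hsub, Nat.cast_sub (Finset.card_le_card hsub),
    ← card_leftMaximalPairs_add_card_repeatedPairs_succ x n l,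
    ← card_leftMaximalPairs_add_card_repeatedPairs_succ x n (l + 1)]
  push_cast
  ring

theorem RRate_half_eq (n : ℕ) {ℓ : ℕ} (hℓ : 1 ≤ ℓ) :
    RRate seqDist shift x n (1 / 2) ℓ =
      (ℓ * (repeatedPairs x n ℓ).card - (ℓ - 1) * (repeatedPairs x n (ℓ + 1)).card) /
        ((n : ℝ) ^ 2 - n) := by
  have hPline (k : ℕ) : Pline seqDist shift x n (1 / 2) (ℓ + k) =
      ((repeatedPairs x n (ℓ + k)).card - 2 * (repeatedPairs x n (ℓ + k + 1)).card +
        (repeatedPairs x n (ℓ + k + 2)).card) / ((n : ℝ) ^ 2 - n) := by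
    rw [Pline, Nlines_half_eq_second_difference x n (by omega)]
  simp only [RRate, hPline]
  rw [tsum_eq_sum (s := Finset.range (n + 1))]
  · simp only [mul_div_assoc', ← Finset.sum_div]
    rw [sum_range_mul_second_difference (fun m => ((repeatedPairs x n m).card : ℝ)),
      repeatedPairs_eq_empty x (by omega : n < ℓ + (n + 1)),
      repeatedPairs_eq_empty x (by omega : n < ℓ + (n + 1) + 1)]
    simp
  · intro k hk
    rw [Finset.mem_range, not_lt] at hk
    rw [repeatedPairs_eq_empty x (by omega : n < ℓ + k),
      repeatedPairs_eq_empty x (by omega : n < ℓ + k + 1),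
      repeatedPairs_eq_empty x (by omega : n < ℓ + k + 2)]
    simp

end LineCount

section QuadraticGrowth

theorem tendsto_div_sq_of_abs_sub_le {a b : ℕ → ℝ} {C L : ℝ} (hab : ∀ n : ℕ, |b n - a n| ≤ C * n)
    (ha : Tendsto (fun n : ℕ => a n / (n : ℝ) ^ 2) atTop (𝓝 L)) :
    Tendsto (fun n : ℕ => b n / (n : ℝ) ^ 2) atTop (𝓝 L) := by
  have hdiff : Tendsto (fun n : ℕ => (b n - a n) / (n : ℝ) ^ 2) atTop (𝓝 0) := by
    refine squeeze_zero_norm (fun n => ?_) (tendsto_const_div_atTop_nhds_zero_nat C)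
    rw [norm_div, Real.norm_eq_abs, norm_pow, Real.norm_natCast]
    rcases n.eq_zero_or_pos with rfl | hn
    · simp
    calc |b n - a n| / (n : ℝ) ^ 2 ≤ C * n / (n : ℝ) ^ 2 := by gcongr; exact hab n
      _ = C / n := by field_simp
  simpa [← add_div] using ha.add hdiff

theorem tendsto_div_sq_sub_self {a : ℕ → ℝ} {L : ℝ}
    (ha : Tendsto (fun n : ℕ => a n / (n : ℝ) ^ 2) atTop (𝓝 L)) :
    Tendsto (fun n : ℕ => a n / ((n : ℝ) ^ 2 - n)) atTop (𝓝 L) := by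
  have hratio : Tendsto (fun n : ℕ => 1 - 1 / (n : ℝ)) atTop (𝓝 1) := by
    simpa using (tendsto_const_div_atTop_nhds_zero_nat (1 : ℝ)).const_sub 1
  have hquot := ha.div hratio one_ne_zero
  rw [div_one] at hquot
  refine hquot.congr' ?_
  filter_upwards [eventually_gt_atTop 0] with n hn
  rw [Pi.div_apply, div_div]
  congr 1
  field_simp

theorem abs_ncard_sub_ncard_le {β : Type*} {s t u : Set β} (hs : s.Finite) (hu : u.Finite)
    (hst : s ⊆ t ∪ u) (hts : t ⊆ s ∪ u) : |(t.ncard : ℝ) - s.ncard| ≤ u.ncard := by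
  have ht : t.Finite := (hs.union hu).subset hts
  have hle : s.ncard ≤ t.ncard + u.ncard :=
    (Set.ncard_le_ncard hst (ht.union hu)).trans (Set.ncard_union_le t u)
  have hge : t.ncard ≤ s.ncard + u.ncard :=
    (Set.ncard_le_ncard hts (hs.union hu)).trans (Set.ncard_union_le s u)
  rw [abs_sub_le_iff, sub_le_iff_le_add', sub_le_iff_le_add']
  constructor <;> assumption_mod_cast

/-- The pairs of `[0, n)²` lying on the diagonal, on one of the axes, or at distance less than `m`
from the upper ends: away from them, finite and infinite recurrence plots have the same lines of
length less than `m`. -/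
def boundaryPairs (n m : ℕ) : Finset (ℕ × ℕ) :=
  {p ∈ Finset.range n ×ˢ Finset.range n |
    p.1 = p.2 ∨ p.1 = 0 ∨ p.2 = 0 ∨ n < p.1 + m ∨ n < p.2 + m}

theorem card_boundaryPairs_le (n m : ℕ) : (boundaryPairs n m).card ≤ (2 * m + 3) * n := by
  set strip : Finset ℕ := insert 0 (Finset.Ico (n - m) n)
  have hstrip : strip.card ≤ m + 1 := by
    refine (Finset.card_insert_le _ _).trans ?_
    rw [Nat.card_Ico]
    omega
  have hcover : boundaryPairs n m ⊆
      (Finset.range n).diag ∪ (strip ×ˢ Finset.range n ∪ Finset.range n ×ˢ strip) := by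
    rintro ⟨i, j⟩
    simp only [boundaryPairs, strip, Finset.mem_filter, Finset.mem_union, Finset.mem_product,
      Finset.mem_diag, Finset.mem_insert, Finset.mem_Ico, Finset.mem_range]
    omega
  calc (boundaryPairs n m).card
      ≤ n + (strip.card * n + n * strip.card) := by
        refine (Finset.card_le_card hcover).trans <| (Finset.card_union_le _ _).trans ?_
        rw [Finset.diag_card, Finset.card_range]
        refine Nat.add_le_add_left ((Finset.card_union_le _ _).trans_eq ?_) n
        rw [Finset.card_product, Finset.card_product, Finset.card_range]
    _ ≤ n + ((m + 1) * n + n * (m + 1)) := by gcongr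
    _ = (2 * m + 3) * n := by ring

theorem abs_ncard_sub_ncard_le_of_boundaryPairs {s t : Set (ℕ × ℕ)} {n m : ℕ} (hs : s.Finite)
    (hst : s ⊆ t ∪ boundaryPairs n m) (hts : t ⊆ s ∪ boundaryPairs n m) :
    |(t.ncard : ℝ) - s.ncard| ≤ (2 * m + 3) * n := by
  refine (abs_ncard_sub_ncard_le hs (Finset.finite_toSet _) hst hts).trans ?_
  rw [Set.ncard_coe_finset]
  exact_mod_cast card_boundaryPairs_le n m

end QuadraticGrowth

section LineDensity

theorem abs_card_repeatedPairs_sub_le {α : Type*} [DecidableEq α] (x : ℕ → α) (n : ℕ) {m : ℕ}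
    (hm : 1 ≤ m) :
    |((repeatedPairs x n m).card : ℝ) -
      {p : ℕ × ℕ | p.1 < n ∧ p.2 < n ∧ ∀ k, k < m →
        seqDist (shift^[p.1 + k] x) (shift^[p.2 + k] x) ≤ 1 / 2}.ncard| ≤ (2 * m + 3) * n := by
  rw [← Set.ncard_coe_finset]
  refine abs_ncard_sub_ncard_le_of_boundaryPairs
    ((Finset.range n ×ˢ Finset.range n).finite_toSet.subset fun p hp => ?_) ?_ ?_
  · simpa using ⟨hp.1, hp.2.1⟩
  all_goals
    rintro ⟨i, j⟩
    simp only [Set.mem_union, Set.mem_ofPred_eq, Finset.mem_coe, mem_repeatedPairs,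
      boundaryPairs, Finset.mem_filter, Finset.mem_product, Finset.mem_range,
      seqDist_le_half_iff, iterate_shift_apply, add_zero, embedSeq_eq_iff]
    grind

theorem tendsto_card_repeatedPairs_div_sq {α : Type*} [DecidableEq α] {x : ℕ → α} {m : ℕ} {κ : ℝ}
    (hm : 1 ≤ m)
    (hκ : Tendsto (fun n => corrSum seqDist shift x m n (1 / 2)) atTop (𝓝 κ)) :
    Tendsto (fun n : ℕ => ((repeatedPairs x n m).card : ℝ) / (n : ℝ) ^ 2) atTop (𝓝 κ) :=
  tendsto_div_sq_of_abs_sub_le (fun n => abs_card_repeatedPairs_sub_le x n hm) hκ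

theorem tendsto_RRate_half {α : Type*} {x : ℕ → α} {κ : ℕ → ℝ}
    (hκ : ∀ m, Tendsto (fun n => corrSum seqDist shift x m n (1 / 2)) atTop (𝓝 (κ m)))
    {ℓ : ℕ} (hℓ : 1 ≤ ℓ) :
    Tendsto (fun n => RRate seqDist shift x n (1 / 2) ℓ) atTop
      (𝓝 (ℓ * κ ℓ - (ℓ - 1) * κ (ℓ + 1))) := by
  classical
  simp only [RRate_half_eq x _ hℓ]
  refine tendsto_div_sq_sub_self <| Tendsto.congr (fun n => ?_) <|
    ((tendsto_card_repeatedPairs_div_sq hℓ (hκ ℓ)).const_mul (ℓ : ℝ)).sub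
      ((tendsto_card_repeatedPairs_div_sq (by omega) (hκ (ℓ + 1))).const_mul (ℓ - 1 : ℝ))
  ring

variable {x : ℕ → Bool}

theorem abs_ncard_Kset_sub_Nlines_le (x : ℕ → Bool) (n : ℕ) {l : ℕ} (hl : 1 ≤ l) :
    |((Kset x l ∩ {p : ℕ × ℕ | p.1 < n ∧ p.2 < n}).ncard : ℝ) -
      Nlines seqDist shift x n (1 / 2) l| ≤ (2 * (l + 1 : ℕ) + 3) * n := by
  refine abs_ncard_sub_ncard_le_of_boundaryPairs
    (by simp only [setOf_isLine_eq_coe_sdiff x n hl, Finset.finite_toSet]) ?_ ?_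
  all_goals
    rintro ⟨i, j⟩
    simp only [Set.mem_union, Set.mem_inter_iff, Set.mem_ofPred_eq, Finset.mem_coe, Kset, IsLine,
      IsInfLine, RPone_half_iff, boundaryPairs, Finset.mem_filter, Finset.mem_product,
      Finset.mem_range]
    grind

theorem hasDens_Kset {κ : ℕ → ℝ}
    (hκ : ∀ m, Tendsto (fun n => corrSum seqDist shift x m n (1 / 2)) atTop (𝓝 (κ m)))
    {l : ℕ} (hl : 1 ≤ l) :
    HasDens (Kset x l) (κ l - 2 * κ (l + 1) + κ (l + 2)) := by
  have hpairs (k : ℕ) := tendsto_card_repeatedPairs_div_sq (m := l + k) (by omega) (hκ (l + k))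
  refine tendsto_div_sq_of_abs_sub_le (fun n => abs_ncard_Kset_sub_Nlines_le x n hl) <|
    Tendsto.congr (fun n => ?_) <| ((hpairs 0).sub ((hpairs 1).const_mul 2)).add (hpairs 2)
  rw [Nlines_half_eq_second_difference x n hl, add_zero]
  ring

theorem HasDens.nonneg {M : Set (ℕ × ℕ)} {a : ℝ} (h : HasDens M a) : 0 ≤ a :=
  ge_of_tendsto' h fun n => by unfold densCount; positivity

end LineDensity

section ConvexSequence

variable {a : ℕ → ℝ}

theorem antitone_sub_succ_of_convex (hconv : ∀ k, 0 ≤ a k - 2 * a (k + 1) + a (k + 2)) :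
    Antitone fun k => a k - a (k + 1) :=
  antitone_nat_of_succ_le fun k => by linarith [hconv k]

theorem antitone_of_convex_of_tendsto_zero (hconv : ∀ k, 0 ≤ a k - 2 * a (k + 1) + a (k + 2))
    (ha : Tendsto a atTop (𝓝 0)) : Antitone a := by
  have hstep : Tendsto (fun k => a k - a (k + 1)) atTop (𝓝 0) := by
    simpa using ha.sub ((tendsto_add_atTop_iff_nat 1).2 ha)
  exact antitone_nat_of_succ_le fun k =>
    sub_nonneg.1 ((antitone_sub_succ_of_convex hconv).le_of_tendsto hstep k)

theorem mul_sub_succ_le_of_convex (hconv : ∀ k, 0 ≤ a k - 2 * a (k + 1) + a (k + 2)) (i j : ℕ) :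
    j * (a (i + j) - a (i + j + 1)) ≤ a i - a (i + j) := by
  calc j * (a (i + j) - a (i + j + 1))
      = ∑ _t ∈ Finset.range j, (a (i + j) - a (i + j + 1)) := by simp [mul_sub]
    _ ≤ ∑ t ∈ Finset.range j, (a (i + t) - a (i + t + 1)) :=
        Finset.sum_le_sum fun t ht =>
          antitone_sub_succ_of_convex hconv (by simp only [Finset.mem_range] at ht; omega)
    _ = a i - a (i + j) := Finset.sum_range_sub' (fun t => a (i + t)) j

theorem tendsto_mul_sub_succ_of_convex (hconv : ∀ k, 0 ≤ a k - 2 * a (k + 1) + a (k + 2))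
    (ha : Tendsto a atTop (𝓝 0)) :
    Tendsto (fun k : ℕ => k * (a k - a (k + 1))) atTop (𝓝 0) := by
  have hanti := antitone_of_convex_of_tendsto_zero hconv ha
  have hstep (k : ℕ) : 0 ≤ a k - a (k + 1) := sub_nonneg.2 (hanti k.le_succ)
  have hbound : Tendsto (fun k => 2 * (a (k / 2) - a k)) atTop (𝓝 0) := by
    simpa using ((ha.comp (Nat.tendsto_div_const_atTop two_ne_zero)).sub ha).const_mul 2
  refine squeeze_zero (fun k => mul_nonneg k.cast_nonneg (hstep k)) (fun k => ?_) hbound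
  have hhalf : (k : ℝ) ≤ 2 * (k - k / 2 : ℕ) := by exact_mod_cast (by omega)
  have hmul := mul_sub_succ_le_of_convex hconv (k / 2) (k - k / 2)
  rw [Nat.add_sub_cancel' (Nat.div_le_self k 2)] at hmul
  calc k * (a k - a (k + 1)) ≤ 2 * (k - k / 2 : ℕ) * (a k - a (k + 1)) :=
        mul_le_mul_of_nonneg_right hhalf (hstep k)
    _ ≤ 2 * (a (k / 2) - a k) := by linarith

theorem hasSum_mul_second_difference {κ : ℕ → ℝ} {ℓ : ℕ}
    (hconv : ∀ l, ℓ ≤ l → 0 ≤ κ l - 2 * κ (l + 1) + κ (l + 2)) (hκ : Tendsto κ atTop (𝓝 0)) :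
    HasSum (fun k : ℕ => ((ℓ + k : ℕ) : ℝ) * (κ (ℓ + k) - 2 * κ (ℓ + k + 1) + κ (ℓ + k + 2)))
      (ℓ * κ ℓ - (ℓ - 1) * κ (ℓ + 1)) := by
  rw [hasSum_iff_tendsto_nat_of_nonneg
    fun k => mul_nonneg (Nat.cast_nonneg _) (hconv (ℓ + k) (Nat.le_add_right ℓ k))]
  simp only [sum_range_mul_second_difference]
  have hshift : Tendsto (fun k => κ (ℓ + k)) atTop (𝓝 0) := by
    simpa only [add_comm ℓ] using (tendsto_add_atTop_iff_nat ℓ).2 hκ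
  have hstep : Tendsto (fun k : ℕ => k * (κ (ℓ + k) - κ (ℓ + k + 1))) atTop (𝓝 0) :=
    tendsto_mul_sub_succ_of_convex (a := fun k => κ (ℓ + k))
      (fun k => hconv (ℓ + k) (Nat.le_add_right ℓ k)) hshift
  have hshift_succ : Tendsto (fun k => κ (ℓ + k + 1)) atTop (𝓝 0) :=
    (tendsto_add_atTop_iff_nat 1).2 hshift
  have hremainder : Tendsto (fun k : ℕ => ((ℓ + k : ℕ) : ℝ) * κ (ℓ + k) -
      (((ℓ + k : ℕ) : ℝ) - 1) * κ (ℓ + k + 1)) atTop (𝓝 0) := by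
    have hsum := hstep.add ((hshift.const_mul (ℓ : ℝ)).sub (hshift_succ.const_mul (ℓ - 1 : ℝ)))
    simp only [mul_zero, sub_zero, add_zero] at hsum
    refine hsum.congr fun k => ?_
    push_cast
    ring
  simpa using hremainder.const_sub (ℓ * κ ℓ - (ℓ - 1) * κ (ℓ + 1))

end ConvexSequence

section WordFrequency

variable {α : Type*} [DecidableEq α] {x : ℕ → α} {m : ℕ}

/-- The number of occurrences of the word `u` in `x` that start before position `n`. -/
def wordCount (x : ℕ → α) (m : ℕ) (u : Fin m → α) (n : ℕ) : ℕ :=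
  {i ∈ Finset.range n | embedSeq m x i = u}.card

/-- Every finite word `u` occurs in `x` with a frequency, namely `F m u` where `m` is the length
of `u`. -/
def HasWordFreq (x : ℕ → α) (F : ∀ m, (Fin m → α) → ℝ) : Prop :=
  ∀ m u, Tendsto (fun n : ℕ => (wordCount x m u n : ℝ) / n) atTop (𝓝 (F m u))

/-- For every `d ≥ 1`, the sequence `x` differs from its shift by `d` somewhere in every window of
a length depending only on `d`. Over a finite alphabet this says that no element of the orbit
closure of `x` is fixed by a positive power of the shift. -/
def IsUniformlyAperiodic {α : Type*} (x : ℕ → α) : Prop :=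
  ∀ d, 1 ≤ d → ∃ m, ∀ i, embedSeq m x i ≠ embedSeq m x (i + d)

theorem sum_wordCount [Fintype α] (x : ℕ → α) (m n : ℕ) : ∑ u, wordCount x m u n = n := by
  simp only [wordCount, ← Finset.card_eq_sum_card_fiberwise (s := Finset.range n)
    (f := embedSeq m x) (t := Finset.univ) (by simp), Finset.card_range]

theorem corrSum_half_eq_sum_sq [Fintype α] (x : ℕ → α) (m n : ℕ) :
    corrSum seqDist shift x m n (1 / 2) = ∑ u, ((wordCount x m u n : ℝ) / n) ^ 2 := by
  have hset : {p : ℕ × ℕ | p.1 < n ∧ p.2 < n ∧ ∀ k, k < m →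
      seqDist (shift^[p.1 + k] x) (shift^[p.2 + k] x) ≤ 1 / 2} =
      ↑{p ∈ Finset.range n ×ˢ Finset.range n | embedSeq m x p.1 = embedSeq m x p.2} := by
    ext ⟨i, j⟩
    simp only [Set.mem_ofPred_eq, Finset.coe_filter, Finset.mem_product, Finset.mem_range,
      seqDist_le_half_iff, iterate_shift_apply, add_zero, embedSeq_eq_iff, and_assoc]
  have hfiber (u : Fin m → α) :
      {p ∈ {p ∈ Finset.range n ×ˢ Finset.range n | embedSeq m x p.1 = embedSeq m x p.2} |
        embedSeq m x p.1 = u} =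
      {i ∈ Finset.range n | embedSeq m x i = u} ×ˢ {i ∈ Finset.range n | embedSeq m x i = u} := by
    ext ⟨i, j⟩
    simp only [Finset.mem_filter, Finset.mem_product]
    grind
  rw [corrSum, hset, Set.ncard_coe_finset, Finset.card_eq_sum_card_fiberwise
    (f := fun p => embedSeq m x p.1) (t := Finset.univ) (by simp), Nat.cast_sum, Finset.sum_div]
  refine Finset.sum_congr rfl fun u _ => ?_
  rw [hfiber, Finset.card_product, Nat.cast_mul, div_pow, sq (wordCount x m u n : ℝ), wordCount]

theorem wordCount_le_of_separated {N : ℕ} (hN : 0 < N)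
    (hsep : ∀ i d, 1 ≤ d → d ≤ N → embedSeq m x i ≠ embedSeq m x (i + d)) (u : Fin m → α) (n : ℕ) :
    wordCount x m u n ≤ n / N + 1 := by
  rw [wordCount, ← Finset.card_range (n / N + 1)]
  refine Finset.card_le_card_of_injOn (· / N) (fun i hi => ?_) fun i hi j hj hij => ?_
  · simp only [Finset.coe_filter, Finset.mem_range, Set.mem_ofPred_eq] at hi
    simpa [Nat.lt_succ_iff] using Nat.div_le_div_right hi.1.le
  · simp only [Finset.coe_filter, Finset.mem_range, Set.mem_ofPred_eq] at hi hj hij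
    by_contra hne
    wlog hlt : i < j generalizing i j
    · exact this j i hij.symm hj hi (Ne.symm hne) (by omega)
    have hgap : j ≤ i + N := by
      have hi_div := Nat.div_add_mod i N
      have hj_div := Nat.div_add_mod j N
      have hj_mod := Nat.mod_lt j hN
      rw [hij] at hi_div
      omega
    refine hsep i (j - i) (by omega) (by omega) ?_
    rw [Nat.add_sub_cancel' hlt.le, hi.2, hj.2]

namespace HasWordFreq

variable {F : ∀ m, (Fin m → α) → ℝ}

theorem nonneg (hF : HasWordFreq x F) (u : Fin m → α) : 0 ≤ F m u :=
  ge_of_tendsto' (hF m u) fun _ => by positivity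

theorem le_one_div_of_separated (hF : HasWordFreq x F) {N : ℕ} (hN : 0 < N)
    (hsep : ∀ i d, 1 ≤ d → d ≤ N → embedSeq m x i ≠ embedSeq m x (i + d)) (u : Fin m → α) :
    F m u ≤ 1 / N := by
  have hlim : Tendsto (fun n : ℕ => 1 / (N : ℝ) + 1 / n) atTop (𝓝 (1 / N)) := by
    simpa using (tendsto_const_div_atTop_nhds_zero_nat (1 : ℝ)).const_add (1 / (N : ℝ))
  refine le_of_tendsto_of_tendsto (hF m u) hlim ?_
  filter_upwards [eventually_gt_atTop 0] with n hn
  calc (wordCount x m u n : ℝ) / n ≤ ((n / N : ℕ) + 1) / n := by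
        gcongr
        exact_mod_cast wordCount_le_of_separated hN hsep u n
    _ ≤ ((n : ℝ) / N + 1) / n := by gcongr; exact Nat.cast_div_le
    _ = 1 / N + 1 / n := by field_simp

variable [Fintype α]

theorem sum_eq_one (hF : HasWordFreq x F) (m : ℕ) : ∑ u, F m u = 1 := by
  refine tendsto_nhds_unique (tendsto_finsetSum Finset.univ fun u _ => hF m u)
    (tendsto_const_nhds.congr' ?_)
  filter_upwards [eventually_gt_atTop 0] with n hn
  rw [← Finset.sum_div, ← Nat.cast_sum, sum_wordCount, div_self (by positivity)]

theorem tendsto_corrSum_half (hF : HasWordFreq x F) (m : ℕ) :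
    Tendsto (fun n => corrSum seqDist shift x m n (1 / 2)) atTop (𝓝 (∑ u, F m u ^ 2)) := by
  simp only [corrSum_half_eq_sum_sq]
  exact tendsto_finsetSum _ fun u _ => (hF m u).pow 2

theorem sum_sq_pos (hF : HasWordFreq x F) (m : ℕ) : 0 < ∑ u, F m u ^ 2 := by
  obtain ⟨u, -, hu⟩ : ∃ u ∈ Finset.univ, F m u ≠ 0 :=
    Finset.exists_ne_zero_of_sum_ne_zero (by simp [hF.sum_eq_one m])
  exact Finset.sum_pos' (fun _ _ => sq_nonneg _) ⟨u, Finset.mem_univ u, by positivity⟩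

end HasWordFreq

theorem IsUniformlyAperiodic.exists_separated {α : Type*} {x : ℕ → α}
    (hx : IsUniformlyAperiodic x) (N : ℕ) :
    ∃ M, ∀ m, M ≤ m → ∀ i d, 1 ≤ d → d ≤ N → embedSeq m x i ≠ embedSeq m x (i + d) := by
  choose! M hM using hx
  refine ⟨(Finset.range (N + 1)).sup M, fun m hm i d hd hdN heq => hM d hd i ?_⟩
  exact embedSeq_eq_of_le ((Finset.le_sup (by simpa using hdN)).trans hm) heq

theorem HasWordFreq.tendsto_sum_sq_zero [Fintype α] {F : ∀ m, (Fin m → α) → ℝ}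
    (hF : HasWordFreq x F) (hx : IsUniformlyAperiodic x) :
    Tendsto (fun m => ∑ u, F m u ^ 2) atTop (𝓝 0) := by
  rw [Metric.tendsto_atTop]
  intro ε hε
  obtain ⟨N, hN⟩ := exists_nat_one_div_lt hε
  obtain ⟨M, hM⟩ := hx.exists_separated (N + 1)
  refine ⟨M, fun m hm => ?_⟩
  rw [Real.dist_0_eq_abs, abs_of_pos (hF.sum_sq_pos m)]
  calc ∑ u, F m u ^ 2 ≤ ∑ u, 1 / ((N + 1 : ℕ) : ℝ) * F m u := by
        refine Finset.sum_le_sum fun u _ => ?_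
        rw [sq]
        exact mul_le_mul_of_nonneg_right
          (hF.le_one_div_of_separated N.succ_pos (hM m hm) u) (hF.nonneg u)
    _ = 1 / ((N : ℝ) + 1) := by rw [← Finset.mul_sum, hF.sum_eq_one, mul_one, Nat.cast_succ]
    _ < ε := hN

end WordFrequency

section BlockAverage

/-- The sum of `g` over the `j`-th block `[P * j, P * (j + 1))` of length `P`. -/
def blockSum (g : ℕ → ℝ) (P j : ℕ) : ℝ :=
  ∑ r ∈ Finset.range P, g (P * j + r)

variable {g : ℕ → ℝ}

theorem sum_range_mul_eq_sum_blockSum (g : ℕ → ℝ) (P N : ℕ) :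
    ∑ i ∈ Finset.range (P * N), g i = ∑ j ∈ Finset.range N, blockSum g P j := by
  induction N with
  | zero => simp
  | succ N ih => rw [Nat.mul_succ, Finset.sum_range_add, ih, Finset.sum_range_succ, blockSum]

theorem blockSum_mul (g : ℕ → ℝ) (P Q j : ℕ) :
    blockSum g (P * Q) j = ∑ r ∈ Finset.range Q, blockSum g P (Q * j + r) := by
  rw [blockSum, sum_range_mul_eq_sum_blockSum (fun i => g (P * Q * j + i))]
  simp only [blockSum, mul_add, mul_assoc, add_assoc]

theorem abs_sum_le_card_of_abs_le_one {ι : Type*} {f : ι → ℝ} (hf : ∀ i, |f i| ≤ 1)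
    (s : Finset ι) : |∑ i ∈ s, f i| ≤ s.card :=
  (Finset.abs_sum_le_sum_abs f s).trans <| by
    simpa using Finset.sum_le_card_nsmul s _ 1 fun i _ => hf i

theorem abs_sum_sub_sum_le {ι : Type*} [Fintype ι] {f g : ι → ℝ} {c d : ℝ}
    (hc : ∀ i j, |f i - g j| ≤ c) {a b : ι} (hab : |f a - g b| ≤ d) :
    |∑ i, f i - ∑ i, g i| ≤ d + (Fintype.card ι - 1) * c := by
  classical
  rw [← Equiv.sum_comp (Equiv.swap a b) g, ← Finset.sum_sub_distrib,
    ← Finset.add_sum_erase _ _ (Finset.mem_univ a), Equiv.swap_apply_left]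
  refine (abs_add_le _ _).trans (add_le_add hab ((Finset.abs_sum_le_sum_abs _ _).trans ?_))
  refine (Finset.sum_le_sum fun i _ => hc i _).trans_eq ?_
  rw [Finset.sum_const, Finset.card_erase_of_mem (Finset.mem_univ a), nsmul_eq_mul,
    Finset.card_univ, Nat.cast_pred (Fintype.card_pos_iff.2 ⟨a⟩)]

theorem abs_blockSum_mul_sub_le {P Q : ℕ} {c d : ℝ}
    (hosc : ∀ i j, |blockSum g P i - blockSum g P j| ≤ c) {i j : ℕ} {r s : Fin Q}
    (hrs : |blockSum g P (Q * i + r) - blockSum g P (Q * j + s)| ≤ d) :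
    |blockSum g (P * Q) i - blockSum g (P * Q) j| ≤ d + (Q - 1) * c := by
  rw [blockSum_mul, blockSum_mul, Finset.sum_range, Finset.sum_range]
  simpa only [Fintype.card_fin] using abs_sum_sub_sum_le
    (f := fun t : Fin Q => blockSum g P (Q * i + t))
    (g := fun t : Fin Q => blockSum g P (Q * j + t)) (fun _ _ => hosc _ _) hrs

theorem abs_sum_range_mul_sub_le {P : ℕ} {c : ℝ}
    (hosc : ∀ i j, |blockSum g P i - blockSum g P j| ≤ c) (k : ℕ) :
    |∑ i ∈ Finset.range (P * k), g i - k * blockSum g P 0| ≤ k * c := by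
  calc |∑ i ∈ Finset.range (P * k), g i - k * blockSum g P 0|
      = |∑ j ∈ Finset.range k, (blockSum g P j - blockSum g P 0)| := by
        rw [sum_range_mul_eq_sum_blockSum, Finset.sum_sub_distrib, Finset.sum_const,
          Finset.card_range, nsmul_eq_mul]
    _ ≤ ∑ _j ∈ Finset.range k, c :=
        (Finset.abs_sum_le_sum_abs _ _).trans (Finset.sum_le_sum fun j _ => hosc j 0)
    _ = k * c := by rw [Finset.sum_const, Finset.card_range, nsmul_eq_mul]

theorem abs_sum_range_sub_mul_blockSum_le (hg : ∀ i, |g i| ≤ 1) {P : ℕ} (hP : 0 < P) {ε : ℝ}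
    (hosc : ∀ i j, |blockSum g P i - blockSum g P j| ≤ ε * P) (n : ℕ) :
    |∑ i ∈ Finset.range n, g i - n * (blockSum g P 0 / P)| ≤ ε * n + 2 * P := by
  obtain ⟨k, r, hr, rfl⟩ : ∃ k r, r < P ∧ P * k + r = n :=
    ⟨n / P, n % P, Nat.mod_lt n hP, Nat.div_add_mod n P⟩
  set b := blockSum g P 0 / P with hb
  have hP' : (0 : ℝ) < P := by exact_mod_cast hP
  have hr' : (r : ℝ) ≤ P := by exact_mod_cast hr.le
  have hε : 0 ≤ ε := nonneg_of_mul_nonneg_left ((abs_nonneg _).trans (hosc 0 0)) hP'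
  have hb_one : |b| ≤ 1 := by
    rw [hb, abs_div, Nat.abs_cast, div_le_one hP']
    simpa [blockSum] using abs_sum_le_card_of_abs_le_one hg (Finset.range P)
  have htail : |∑ t ∈ Finset.range r, g (P * k + t)| ≤ r := by
    simpa using abs_sum_le_card_of_abs_le_one (fun t => hg (P * k + t)) (Finset.range r)
  have hsplit : ∑ i ∈ Finset.range (P * k + r), g i - (P * k + r : ℕ) * b =
      (∑ i ∈ Finset.range (P * k), g i - k * blockSum g P 0) +
        (∑ t ∈ Finset.range r, g (P * k + t) - r * b) := by
    rw [Finset.sum_range_add, ← mul_div_cancel₀ (blockSum g P 0) hP'.ne', ← hb]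
    push_cast
    ring
  calc |∑ i ∈ Finset.range (P * k + r), g i - (P * k + r : ℕ) * b|
      ≤ |∑ i ∈ Finset.range (P * k), g i - k * blockSum g P 0| +
          (|∑ t ∈ Finset.range r, g (P * k + t)| + |r * b|) := by
        rw [hsplit]
        exact (abs_add_le _ _).trans (add_le_add_right (abs_sub _ _) _)
    _ ≤ k * (ε * P) + (r + r) := by
        rw [abs_mul, Nat.abs_cast]
        gcongr
        · exact abs_sum_range_mul_sub_le hosc k
        · exact mul_le_of_le_one_right r.cast_nonneg hb_one
    _ ≤ ε * (P * k + r : ℕ) + 2 * P := by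
        push_cast
        linarith [mul_nonneg hε r.cast_nonneg]

theorem exists_tendsto_of_eventually_dist_le {X : Type*} [PseudoMetricSpace X] [CompleteSpace X]
    {u : ℕ → X} (hu : ∀ ε > 0, ∃ L, ∀ᶠ n in atTop, dist (u n) L ≤ ε) :
    ∃ L, Tendsto u atTop (𝓝 L) := by
  refine cauchySeq_tendsto_of_complete (Metric.cauchySeq_iff.2 fun ε hε => ?_)
  obtain ⟨L, hL⟩ := hu (ε / 3) (by positivity)
  obtain ⟨N, hN⟩ := eventually_atTop.1 hL
  refine ⟨N, fun m hm n hn => ?_⟩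
  linarith [dist_triangle_right (u m) (u n) L, hN m hm, hN n hn]

theorem exists_tendsto_average_of_blockSum (hg : ∀ i, |g i| ≤ 1)
    (hosc : ∀ ε > 0, ∃ P : ℕ, 0 < P ∧ ∀ i j, |blockSum g P i - blockSum g P j| ≤ ε * P) :
    ∃ L, Tendsto (fun n : ℕ => (∑ i ∈ Finset.range n, g i) / n) atTop (𝓝 L) := by
  refine exists_tendsto_of_eventually_dist_le fun ε hε => ?_
  obtain ⟨P, hP, hPosc⟩ := hosc (ε / 2) (by positivity)
  refine ⟨blockSum g P 0 / P, ?_⟩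
  have hsmall : ∀ᶠ n : ℕ in atTop, 2 * (P : ℝ) / n ≤ ε / 2 :=
    (tendsto_const_div_atTop_nhds_zero_nat _).eventually_le_const (by positivity)
  filter_upwards [hsmall, eventually_gt_atTop 0] with n hn hn0
  have hn0' : (0 : ℝ) < n := by exact_mod_cast hn0
  calc dist ((∑ i ∈ Finset.range n, g i) / n) (blockSum g P 0 / P)
      = |∑ i ∈ Finset.range n, g i - n * (blockSum g P 0 / P)| / n := by
        rw [Real.dist_eq, ← Nat.abs_cast n, ← abs_div, Nat.abs_cast, sub_div,
          mul_div_cancel_left₀ _ hn0'.ne']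
    _ ≤ (ε / 2 * n + 2 * P) / n := by
        gcongr
        exact abs_sum_range_sub_mul_blockSum_le hg hP hPosc n
    _ = ε / 2 + 2 * P / n := by field_simp
    _ ≤ ε := by linarith

end BlockAverage

section BlockDetermined

variable {α : Type*} {x : ℕ → α} {P Q m : ℕ}

/-- The block of length `Q` of `x` at position `Q * i` is a function of the letter `x i`; that is,
`x` is fixed by a substitution of constant length `Q`. -/
def IsBlockDetermined (x : ℕ → α) (Q : ℕ) : Prop :=
  ∀ i j, x i = x j → embedSeq Q x (Q * i) = embedSeq Q x (Q * j)

theorem IsBlockDetermined.mul (hP : IsBlockDetermined x P) (hQ : IsBlockDetermined x Q) :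
    IsBlockDetermined x (P * Q) := by
  intro i j hij
  have hletters := (embedSeq_eq_iff x Q _ _).1 (hQ i j hij)
  rw [embedSeq_eq_iff]
  intro h hh
  have hP0 : 0 < P := Nat.pos_of_ne_zero (by rintro rfl; simp at hh)
  have hword := hP _ _ (hletters (h / P) (Nat.div_lt_of_lt_mul hh))
  have hsplit (k : ℕ) : P * Q * k + h = P * (Q * k + h / P) + h % P := by
    rw [mul_add, add_assoc, Nat.div_add_mod, mul_assoc]
  rw [hsplit, hsplit]
  exact (embedSeq_eq_iff x P _ _).1 hword (h % P) (Nat.mod_lt h hP0)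

theorem IsBlockDetermined.pow (hQ : IsBlockDetermined x Q) (k : ℕ) :
    IsBlockDetermined x (Q ^ k) := by
  induction k with
  | zero => exact fun i j hij => by simpa [embedSeq_eq_iff] using hij
  | succ k ih => exact ih.mul hQ

theorem abs_blockSum_sub_le_of_embedSeq_eq {φ : (Fin m → α) → ℝ} (hφ : ∀ u, φ u ∈ Set.Icc 0 1)
    {i j : ℕ} (hij : embedSeq P x (P * i) = embedSeq P x (P * j)) :
    |blockSum (fun t => φ (embedSeq m x t)) P i - blockSum (fun t => φ (embedSeq m x t)) P j| ≤
      m := by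
  rw [embedSeq_eq_iff] at hij
  -- Only the last `m` positions see letters outside the block.
  have hinner (r : ℕ) (hr : r + m ≤ P) :
      embedSeq m x (P * i + r) = embedSeq m x (P * j + r) := by
    simp only [embedSeq_eq_iff, add_assoc]
    exact fun h hh => hij (r + h) (by omega)
  rw [blockSum, blockSum, ← Finset.sum_sub_distrib,
    ← Finset.sum_subset (s₁ := Finset.Ico (P - m) P) (fun r hr => by simp_all)]
  · refine (abs_sum_le_card_of_abs_le_one (fun r => ?_) _).trans ?_
    · simpa only [Real.dist_eq] using Real.dist_le_of_mem_Icc_01 (hφ _) (hφ _)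
    · rw [Nat.card_Ico]
      exact_mod_cast (by omega)
  · intro r hr hr'
    simp only [Finset.mem_range, Finset.mem_Ico] at hr hr'
    rw [hinner r (by omega), sub_self]

-- Any two blocks of length `Q ^ (k + 1)` have a common letter among the `Q` letters determining
-- them, and the sub-blocks of length `Q ^ k` that it determines coincide.
theorem IsBlockDetermined.abs_blockSum_pow_sub_le (hx : IsBlockDetermined x Q) (hQ : 2 ≤ Q)
    (hletter : ∀ i j, ∃ r < Q, x (Q * j + r) = x i)
    {φ : (Fin m → α) → ℝ} (hφ : ∀ u, φ u ∈ Set.Icc 0 1) (k i j : ℕ) :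
    |blockSum (fun t => φ (embedSeq m x t)) (Q ^ k) i -
      blockSum (fun t => φ (embedSeq m x t)) (Q ^ k) j| ≤ (Q - 1) ^ k * (1 + k * m) := by
  induction k generalizing i j with
  | zero =>
    simpa [blockSum, Real.dist_eq] using Real.dist_le_of_mem_Icc_01
      (hφ (embedSeq m x i)) (hφ (embedSeq m x j))
  | succ k ih =>
    obtain ⟨s, hs, hletter_s⟩ := hletter (Q * i) j
    have hstep := abs_blockSum_mul_sub_le ih (r := ⟨0, by omega⟩) (s := ⟨s, hs⟩)
      (abs_blockSum_sub_le_of_embedSeq_eq hφ (hx.pow k _ _ hletter_s.symm))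
    have hQ_sub : (1 : ℝ) ≤ (Q - 1) ^ (k + 1) :=
      one_le_pow₀ (by linarith [show (2 : ℝ) ≤ Q by exact_mod_cast hQ])
    calc _ ≤ (m : ℝ) + (Q - 1) * ((Q - 1) ^ k * (1 + k * m)) := hstep
      _ ≤ (Q - 1) ^ (k + 1) * m + (Q - 1) * ((Q - 1) ^ k * (1 + k * m)) := by
        gcongr
        exact le_mul_of_one_le_left m.cast_nonneg hQ_sub
      _ = (Q - 1) ^ (k + 1) * (1 + (k + 1 : ℕ) * m) := by push_cast; ring

theorem tendsto_sub_one_pow_mul_div_pow {a : ℝ} (ha : 1 ≤ a) (c : ℝ) :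
    Tendsto (fun k : ℕ => (a - 1) ^ k * (1 + k * c) / a ^ k) atTop (𝓝 0) := by
  have hratio_nonneg : 0 ≤ (a - 1) / a := div_nonneg (by linarith) (by linarith)
  have hratio_lt : (a - 1) / a < 1 := (div_lt_one (by linarith)).2 (by linarith)
  have hlim := (tendsto_pow_atTop_nhds_zero_of_lt_one hratio_nonneg hratio_lt).add
    ((tendsto_self_mul_const_pow_of_lt_one hratio_nonneg hratio_lt).mul_const c)
  rw [zero_mul, add_zero] at hlim
  refine hlim.congr fun k => ?_
  rw [div_pow]
  ring

theorem IsBlockDetermined.exists_tendsto_average (hx : IsBlockDetermined x Q) (hQ : 2 ≤ Q)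
    (hletter : ∀ i j, ∃ r < Q, x (Q * j + r) = x i)
    {φ : (Fin m → α) → ℝ} (hφ : ∀ u, φ u ∈ Set.Icc 0 1) :
    ∃ L, Tendsto (fun n : ℕ => (∑ i ∈ Finset.range n, φ (embedSeq m x i)) / n) atTop (𝓝 L) := by
  have hbound (i : ℕ) : |φ (embedSeq m x i)| ≤ 1 := by
    rw [abs_of_nonneg (hφ _).1]
    exact (hφ _).2
  refine exists_tendsto_average_of_blockSum hbound fun ε hε => ?_
  have hQ_one : (1 : ℝ) ≤ Q := by exact_mod_cast (by omega : 1 ≤ Q)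
  obtain ⟨k, hk⟩ :=
    ((tendsto_sub_one_pow_mul_div_pow hQ_one m).eventually_le_const hε).exists
  refine ⟨Q ^ k, by positivity, fun i j => ?_⟩
  refine (hx.abs_blockSum_pow_sub_le hQ hletter hφ k i j).trans ?_
  rwa [Nat.cast_pow, ← div_le_iff₀ (by positivity)]

theorem IsBlockDetermined.exists_hasWordFreq [DecidableEq α] (hx : IsBlockDetermined x Q)
    (hQ : 2 ≤ Q) (hletter : ∀ i j, ∃ r < Q, x (Q * j + r) = x i) : ∃ F, HasWordFreq x F := by
  have hlim (m : ℕ) (u : Fin m → α) :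
      ∃ L, Tendsto (fun n : ℕ => (wordCount x m u n : ℝ) / n) atTop (𝓝 L) := by
    simpa only [wordCount, Finset.sum_boole] using
      hx.exists_tendsto_average hQ hletter (φ := fun v => if v = u then 1 else 0)
        fun v => by split_ifs <;> simp
  choose F hF using hlim
  exact ⟨F, hF⟩

end BlockDetermined

section UniformAperiodicity

theorem isUniformlyAperiodic_of_bounded_gaps {α : Type*} {x y : ℕ → α}
    (hy : ∀ p, 1 ≤ p → ∃ i, y (i + p) ≠ y i)
    (hgap : ∀ n, ∃ B, ∀ t, ∃ s, t ≤ s ∧ s + n ≤ t + B ∧ ∀ h, h < n → x (s + h) = y h) :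
    IsUniformlyAperiodic x := by
  intro d hd
  obtain ⟨i, hi⟩ := hy d hd
  obtain ⟨B, hB⟩ := hgap (i + d + 1)
  refine ⟨B, fun t ht => hi ?_⟩
  obtain ⟨s, hts, hsB, hs⟩ := hB t
  have heq := (embedSeq_eq_iff x B t (t + d)).1 ht (s - t + i) (by omega)
  rw [← hs i (by omega), ← hs (i + d) (by omega)]
  grind

theorem exists_forall_eq_of_ofFn_infix {α : Type*} {x y : ℕ → α} {n N b : ℕ}
    (h : (List.ofFn fun t : Fin n => y t) <:+: List.ofFn (embedSeq N x b)) :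
    ∃ r, r + n ≤ N ∧ ∀ h, h < n → x (b + r + h) = y h := by
  obtain ⟨r, hr, hletter⟩ := List.infix_iff_getElem?.1 h
  simp only [List.length_ofFn] at hr hletter
  refine ⟨r, by omega, fun h hh => ?_⟩
  specialize hletter h hh
  rw [List.getElem?_eq_getElem (by rw [List.length_ofFn]; omega)] at hletter
  simpa [embedSeq, add_assoc, add_comm h r] using hletter

end UniformAperiodicity

section Substitution

variable {ζ : Bool → List Bool} {q : ℕ} {x : ℕ → Bool}

theorem substWord_eq_flatten_map (ζ : Bool → List Bool) (w : List Bool) :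
    substWord ζ w = (w.map ζ).flatten := by
  induction w with
  | nil => rfl
  | cons a w ih => rw [List.map_cons, List.flatten_cons, ← ih]; rfl

theorem apply_eq_ofFn_embedSeq (hζ : IsConstLenSubst ζ q) (hx : substSeq ζ q x = x) (i : ℕ) :
    ζ (x i) = List.ofFn (embedSeq q x (q * i)) := by
  refine List.ext_getElem (by rw [hζ.2, List.length_ofFn]) fun r hr _ => ?_
  have hrq : r < q := hζ.2 (x i) ▸ hr
  have hletter := congrFun hx (q * i + r)
  rw [substSeq, Nat.mul_add_div (by omega), Nat.div_eq_of_lt hrq, add_zero, Nat.mul_add_mod,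
    Nat.mod_eq_of_lt hrq, List.getD_eq_getElem _ _ hr] at hletter
  rw [List.getElem_ofFn, embedSeq, hletter]

theorem substWord_ofFn_embedSeq (hζ : IsConstLenSubst ζ q) (hx : substSeq ζ q x = x) (n i : ℕ) :
    substWord ζ (List.ofFn (embedSeq n x i)) = List.ofFn (embedSeq (q * n) x (q * i)) := by
  rw [substWord_eq_flatten_map, List.map_ofFn, List.ofFn_mul']
  refine congrArg (List.flatten <| List.ofFn ·) (funext fun t => ?_)
  rw [Function.comp_apply, embedSeq, apply_eq_ofFn_embedSeq hζ hx]
  refine congrArg List.ofFn (funext fun r => ?_)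
  simp only [embedSeq, mul_add, add_assoc]

theorem iterate_substWord_singleton (hζ : IsConstLenSubst ζ q) (hx : substSeq ζ q x = x)
    (k i : ℕ) :
    (substWord ζ)^[k] [x i] = List.ofFn (embedSeq (q ^ k) x (q ^ k * i)) := by
  induction k with
  | zero => simp [embedSeq]
  | succ k ih =>
    rw [Function.iterate_succ_apply', ih, substWord_ofFn_embedSeq hζ hx, ← mul_assoc, pow_succ']

theorem isBlockDetermined_of_substSeq_eq (hζ : IsConstLenSubst ζ q) (hx : substSeq ζ q x = x) :
    IsBlockDetermined x q := by
  intro i j hij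
  refine List.ofFn_injective ?_
  rw [← apply_eq_ofFn_embedSeq hζ hx, ← apply_eq_ofFn_embedSeq hζ hx, hij]

theorem exists_pow_block_contains_letters (hζ : IsConstLenSubst ζ q) (hprim : IsPrimitive ζ)
    (hx : substSeq ζ q x = x) :
    ∃ K, 1 ≤ K ∧ ∀ a j, ∃ r < q ^ K, x (q ^ K * j + r) = a := by
  obtain ⟨K, hK, hmem⟩ := hprim
  refine ⟨K, hK, fun a j => ?_⟩
  have ha := hmem (x j) a
  rw [iterate_substWord_singleton hζ hx, List.mem_ofFn] at ha
  obtain ⟨r, hr⟩ := ha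
  exact ⟨r, r.isLt, hr⟩

theorem exists_hasWordFreq_of_isPrimitive (hζ : IsConstLenSubst ζ q) (hprim : IsPrimitive ζ)
    (hx : substSeq ζ q x = x) : ∃ F, HasWordFreq x F := by
  obtain ⟨K, hK, hletter⟩ := exists_pow_block_contains_letters hζ hprim hx
  exact ((isBlockDetermined_of_substSeq_eq hζ hx).pow K).exists_hasWordFreq
    (hζ.1.trans (Nat.le_self_pow (by omega) q)) fun i => hletter (x i)

theorem exists_bounded_gap_of_mem_substShift (hζ : IsConstLenSubst ζ q) (hprim : IsPrimitive ζ)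
    (hx : substSeq ζ q x = x) {y : ℕ → Bool} (hy : y ∈ SubstShift ζ) (n : ℕ) :
    ∃ B, ∀ t, ∃ s, t ≤ s ∧ s + n ≤ t + B ∧ ∀ h, h < n → x (s + h) = y h := by
  obtain ⟨K, -, hletter⟩ := exists_pow_block_contains_letters hζ hprim hx
  obtain ⟨a, k, -, hinfix⟩ := hy n
  have hq : 0 < q := by have := hζ.1; omega
  have hB : 0 < q ^ k * q ^ K := by positivity
  refine ⟨2 * (q ^ k * q ^ K), fun t => ?_⟩
  set j := t / (q ^ k * q ^ K) + 1 with hj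
  obtain ⟨p, hp, rfl⟩ := hletter a j
  rw [iterate_substWord_singleton hζ hx] at hinfix
  obtain ⟨r, hr, hword⟩ := exists_forall_eq_of_ofFn_infix hinfix
  have hlower : t ≤ q ^ k * q ^ K * j := (Nat.lt_mul_div_succ t hB).le
  have hupper : q ^ k * q ^ K * j ≤ t + q ^ k * q ^ K := by
    rw [hj, mul_add_one]
    exact Nat.add_le_add_right (Nat.mul_div_le t _) _
  have hblock : q ^ k * p + q ^ k ≤ q ^ k * q ^ K := Nat.mul_le_mul_left _ hp
  refine ⟨q ^ k * (q ^ K * j + p) + r, ?_, ?_, hword⟩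
  · rw [mul_add, ← mul_assoc]
    omega
  · rw [mul_add, ← mul_assoc]
    omega

theorem isUniformlyAperiodic_of_isAperiodic (hζ : IsConstLenSubst ζ q) (hprim : IsPrimitive ζ)
    (hap : IsAperiodic ζ) (hx : substSeq ζ q x = x) : IsUniformlyAperiodic x := by
  obtain ⟨y, hy, hnonper⟩ := hap
  exact isUniformlyAperiodic_of_bounded_gaps hnonper
    (exists_bounded_gap_of_mem_substShift hζ hprim hx hy)

end Substitution

end RQA

theorem RRate_eq_sum_densK_general {x : ℕ → Bool} {F : ∀ m, (Fin m → Bool) → ℝ}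
    (hfreq : HasWordFreq x F) (haper : IsUniformlyAperiodic x) {ℓ : ℕ} (hℓ : 1 ≤ ℓ) :
    ∃ dK : ℕ → ℝ,
      (∀ l : ℕ, 1 ≤ l → HasDens (Kset x l) (dK l)) ∧
      Summable (fun k : ℕ => ((ℓ + k : ℕ) : ℝ) * dK (ℓ + k)) ∧
      0 < ∑' k : ℕ, ((ℓ + k : ℕ) : ℝ) * dK (ℓ + k) ∧
      Tendsto (fun n : ℕ => RRate seqDist shift x n (1 / 2 : ℝ) ℓ) atTop
        (𝓝 (∑' k : ℕ, ((ℓ + k : ℕ) : ℝ) * dK (ℓ + k))) := by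
  set κ : ℕ → ℝ := fun m => ∑ u, F m u ^ 2
  have hκ (m : ℕ) : Tendsto (fun n => corrSum seqDist shift x m n (1 / 2)) atTop (𝓝 (κ m)) :=
    hfreq.tendsto_corrSum_half m
  have hκ_zero : Tendsto κ atTop (𝓝 0) := hfreq.tendsto_sum_sq_zero haper
  have hconv (l : ℕ) (hl : ℓ ≤ l) : 0 ≤ κ l - 2 * κ (l + 1) + κ (l + 2) :=
    (hasDens_Kset hκ (hℓ.trans hl)).nonneg
  have hsum := hasSum_mul_second_difference hconv hκ_zero
  have hpos : 0 < ℓ * κ ℓ - (ℓ - 1) * κ (ℓ + 1) := by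
    have hanti : Antitone fun k => κ (ℓ + k) :=
      antitone_of_convex_of_tendsto_zero (fun k => hconv (ℓ + k) (Nat.le_add_right ℓ k))
        (by simpa only [add_comm ℓ] using (tendsto_add_atTop_iff_nat ℓ).2 hκ_zero)
    have hstep : κ (ℓ + 1) ≤ κ ℓ := hanti zero_le_one
    have hℓ_sub : (0 : ℝ) ≤ ℓ - 1 := by simpa using hℓ
    linarith [hfreq.sum_sq_pos ℓ, mul_nonneg hℓ_sub (sub_nonneg.2 hstep)]
  refine ⟨fun l => κ l - 2 * κ (l + 1) + κ (l + 2), fun l => hasDens_Kset hκ, hsum.summable, ?_⟩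
  rw [hsum.tsum_eq]
  exact ⟨hpos, tendsto_RRate_half hκ hℓ⟩

/-- RR_ℓ(x,∞,ε₀) exists and equals Σ_{l≥ℓ} l·dens(K_l) > 0. -/
theorem RRate_eq_sum_densK
    (ζ : Bool → List Bool) (q : ℕ) (hζ : IsConstLenSubst ζ q)
    (hprim : IsPrimitive ζ) (hap : IsAperiodic ζ)
    (hζ0 : (ζ false).head? = some false)
    (x : ℕ → Bool) (hx0 : x 0 = false) (hxfix : substSeq ζ q x = x)
    (ℓ : ℕ) (hℓ : 1 ≤ ℓ) :
    ∃ dK : ℕ → ℝ,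
      (∀ l : ℕ, 1 ≤ l → HasDens (Kset x l) (dK l)) ∧
      Summable (fun k : ℕ => ((ℓ + k : ℕ) : ℝ) * dK (ℓ + k)) ∧
      0 < ∑' k : ℕ, ((ℓ + k : ℕ) : ℝ) * dK (ℓ + k) ∧
      Tendsto (fun n : ℕ => RRate seqDist shift x n (1/2 : ℝ) ℓ) atTop
        (𝓝 (∑' k : ℕ, ((ℓ + k : ℕ) : ℝ) * dK (ℓ + k))) := by
  obtain ⟨F, hF⟩ := exists_hasWordFreq_of_isPrimitive hζ hprim hxfix
  exact RRate_eq_sum_densK_general hF (isUniformlyAperiodic_of_isAperiodic hζ hprim hap hxfix) hℓ
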